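/- Let R be a regular n-polytope. Then for every flag Λ of R, the stabilizer of Λ in the monodromy group Mon(R), acting on the set of flags, is the trivial subgroup. -/

import Mathlib

/-- Two flags are `j`-adjacent (w.r.t. the rank function `rk`): they are distinct
and agree in every face whose rank is different from `j`. -/
def IsPolytopeAdj {P : Type*} [PartialOrder P] (rk : P → ℤ) (j : ℤ) (c d : Flag P) : Prop :=
  c ≠ d ∧ ∀ z : P, rk z ≠ j → (z ∈ c ↔ z ∈ d)

/-- `P`, with strictly monotone rank function `rk` onto `{-1, 0, ..., n}`, is an
abstract polytope of rank `n`: it has a least and a greatest face, satisfies the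
diamond condition and is strongly flag-connected. -/
structure IsAbstractPolytope {P : Type*} [PartialOrder P] (n : ℤ) (rk : P → ℤ) : Prop where
  neg_one_le : -1 ≤ n
  strictMono : ∀ {F G : P}, F < G → rk F < rk G
  rank_range : Set.range rk = Set.Icc (-1 : ℤ) n
  exists_bot : ∃ F₀ : P, ∀ F, F₀ ≤ F
  exists_top : ∃ Fn : P, ∀ F, F ≤ Fn
  diamond : ∀ F G : P, F < G → rk G = rk F + 2 →
    ∃ H₁ H₂ : P, H₁ ≠ H₂ ∧ ∀ H : P, (F < H ∧ H < G) ↔ (H = H₁ ∨ H = H₂)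
  strongly_connected : ∀ F G : P, F ≤ G →
    ∀ c d : Flag ↥(Set.Icc F G),
      Relation.ReflTransGen
        (fun c' d' => ∃ j : ℤ, IsPolytopeAdj (fun H => rk H.val) j c' d') c d

/-- A covering of polytopes: an order- and rank-preserving map sending flags to
flags and sending `j`-adjacent pairs of flags to `j`-adjacent pairs of flags. -/
def IsPolytopeCovering {R Q : Type*} [PartialOrder R] [PartialOrder Q]
    (rkR : R → ℤ) (rkQ : Q → ℤ) (η : R → Q) : Prop :=
  Monotone η ∧ (∀ F : R, rkQ (η F) = rkR F) ∧
  (∀ c : Flag R, ∃ c' : Flag Q, η '' ↑c = ↑c') ∧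
  (∀ (j : ℤ) (c d : Flag R) (c' d' : Flag Q), η '' ↑c = ↑c' → η '' ↑d = ↑d' →
    IsPolytopeAdj rkR j c d → IsPolytopeAdj rkQ j c' d')

/-- A polytope is regular if its automorphism group (order-preserving bijections)
acts transitively on the set of flags. -/
def IsRegularPolytope {P : Type*} [PartialOrder P] : Prop :=
  ∀ c d : Flag P, ∃ e : P ≃o P, e '' (↑c : Set P) = (↑d : Set P)

/-- An abstract polytope of rank `n`, bundled with its carrier. -/
structure BundledPolytope (n : ℤ) where
  carrier : Type
  [po : PartialOrder carrier]
  rk : carrier → ℤ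
  isPolytope : IsAbstractPolytope n rk

attribute [instance] BundledPolytope.po


/-!
By the diamond condition a flag has only one `j`-adjacent flag, and automorphisms preserve ranks,
hence adjacency; so the monodromy group commutes with the action of the automorphism group on
flags. If `w` fixes `Λ` and `e` is an automorphism with `e Λ = Φ`, then
`w Φ = w (e Λ) = e (w Λ) = e Λ = Φ`, and in the regular case every flag `Φ` arises in this way.
-/

section RankOnFlags

variable {P α : Type*} [PartialOrder P] [Preorder α] {f : P → α} {x y : P}

theorem lt_iff_lt_of_mem_flag (hf : StrictMono f) (c : Flag P) (hx : x ∈ c) (hy : y ∈ c) :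
    f x < f y ↔ x < y := by
  classical
  exact (hf.comp (Subtype.strictMono_coe (· ∈ c))).lt_iff_lt (a := ⟨x, hx⟩) (b := ⟨y, hy⟩)

theorem injOn_flag_of_strictMono (hf : StrictMono f) (c : Flag P) : Set.InjOn f c := by
  classical
  exact Set.injOn_iff_injective.2 (hf.comp (Subtype.strictMono_coe (· ∈ c))).injective

end RankOnFlags

theorem mem_flag_map_iff {P Q : Type*} [PartialOrder P] [PartialOrder Q] (e : P ≃o Q) (c : Flag P)
    (y : Q) : y ∈ Flag.map e c ↔ e.symm y ∈ c := by
  rw [← Flag.mem_coe_iff, Flag.coe_map, e.image_eq_preimage_symm, Set.mem_preimage,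
    Flag.mem_coe_iff]

namespace IsPolytopeAdj

variable {P : Type*} [PartialOrder P] {rk : P → ℤ} {j : ℤ} {b c d : Flag P}

theorem symm (h : IsPolytopeAdj rk j c d) : IsPolytopeAdj rk j d c :=
  ⟨h.1.symm, fun z hz => (h.2 z hz).symm⟩

theorem trans_of_ne (hbc : IsPolytopeAdj rk j b c) (hcd : IsPolytopeAdj rk j c d) (hbd : b ≠ d) :
    IsPolytopeAdj rk j b d :=
  ⟨hbd, fun z hz => (hbc.2 z hz).trans (hcd.2 z hz)⟩

theorem rank_image_subset (h : IsPolytopeAdj rk j c d) : rk '' c ⊆ rk '' d := by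
  rintro _ ⟨x, hx, rfl⟩
  by_cases hxj : rk x = j
  · by_contra hd
    have hdc : (d : Set P) ⊆ c := fun y hy =>
      (h.2 y fun hyj => hd ⟨y, hy, hyj.trans hxj.symm⟩).2 hy
    exact h.1 (Flag.ext (d.max_chain' c.chain_le hdc)).symm
  · exact ⟨x, (h.2 x hxj).1 hx, rfl⟩

theorem rank_image_eq (h : IsPolytopeAdj rk j c d) : rk '' c = rk '' d :=
  h.rank_image_subset.antisymm h.symm.rank_image_subset

theorem ne_of_mem_of_mem (h : IsPolytopeAdj rk j c d) (hrk : StrictMono rk) {x y : P}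
    (hx : x ∈ c) (hxj : rk x = j) (hy : y ∈ d) : x ≠ y := by
  rintro rfl
  refine h.1 (SetLike.ext fun z => ?_)
  by_cases hzj : rk z = j
  · have hzx : rk z = rk x := hzj.trans hxj.symm
    constructor <;> intro hz
    · rwa [injOn_flag_of_strictMono hrk c hz hx hzx]
    · rwa [injOn_flag_of_strictMono hrk d hz hy hzx]
  · exact h.2 z hzj

theorem map {Q : Type*} [PartialOrder Q] {rkQ : Q → ℤ} (h : IsPolytopeAdj rk j c d) (e : P ≃o Q)
    (he : ∀ x, rkQ (e x) = rk x) : IsPolytopeAdj rkQ j (Flag.map e c) (Flag.map e d) := by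
  refine ⟨(Flag.map e).injective.ne h.1, fun z hz => ?_⟩
  rw [mem_flag_map_iff, mem_flag_map_iff]
  exact h.2 (e.symm z) (by rwa [← he, e.apply_symm_apply])

end IsPolytopeAdj

/-- A pre-polytope of rank `n`. Compared with an abstract polytope, the existence of a least and a
greatest face and strong flag-connectedness are weakened to the condition that the faces of every
flag have exactly the ranks `-1, ..., n`. -/
structure IsPrepolytope {P : Type*} [PartialOrder P] (n : ℤ) (rk : P → ℤ) : Prop where
  strictMono : StrictMono rk
  rank_image_flag : ∀ c : Flag P, rk '' c = Set.Icc (-1) n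
  diamond : ∀ F G : P, F < G → rk G = rk F + 2 →
    ∃ H₁ H₂ : P, H₁ ≠ H₂ ∧ ∀ H : P, (F < H ∧ H < G) ↔ (H = H₁ ∨ H = H₂)

namespace IsAbstractPolytope

variable {P : Type*} [PartialOrder P] {n : ℤ} {rk : P → ℤ}

theorem rank_image_flag_eq (hP : IsAbstractPolytope n rk) (c d : Flag P) :
    rk '' c = rk '' d := by
  obtain ⟨F, hF⟩ := hP.exists_bot
  obtain ⟨G, hG⟩ := hP.exists_top
  have hFG : Set.Icc F G = Set.univ := Set.eq_univ_of_forall fun x => ⟨hF x, hG x⟩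
  let e : P ≃o Set.Icc F G := OrderIso.Set.univ.symm.trans (OrderIso.setCongr _ _ hFG.symm)
  have image_map (s : Flag P) :
      (fun x : Set.Icc F G => rk x) '' (Flag.map e s : Flag (Set.Icc F G)) = rk '' s := by
    rw [Flag.coe_map, Set.image_image]
    rfl
  rw [← image_map c, ← image_map d]
  generalize Flag.map e d = d'
  induction hP.strongly_connected F G (hF G) (Flag.map e c) d' with
  | refl => rfl
  | tail _ hadj ih => exact ih.trans hadj.choose_spec.rank_image_eq

theorem isPrepolytope (hP : IsAbstractPolytope n rk) : IsPrepolytope n rk where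
  strictMono _ _ h := hP.strictMono h
  rank_image_flag c := by
    rw [← hP.rank_range]
    refine (Set.image_subset_range rk c).antisymm ?_
    rintro _ ⟨x, rfl⟩
    obtain ⟨d, hxd⟩ := Flag.exists_mem x
    exact hP.rank_image_flag_eq d c ▸ Set.mem_image_of_mem rk hxd
  diamond := hP.diamond

end IsAbstractPolytope

namespace IsPrepolytope

variable {P : Type*} [PartialOrder P] {n : ℤ} {rk : P → ℤ}

theorem rank_mem_Icc (hP : IsPrepolytope n rk) (x : P) : rk x ∈ Set.Icc (-1) n := by
  obtain ⟨c, hxc⟩ := Flag.exists_mem x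
  exact hP.rank_image_flag c ▸ Set.mem_image_of_mem rk hxc

theorem exists_mem_flag_rank_eq (hP : IsPrepolytope n rk) (c : Flag P) {r : ℤ} (hr : -1 ≤ r)
    (hrn : r ≤ n) : ∃ x ∈ c, rk x = r :=
  (hP.rank_image_flag c).ge ⟨hr, hrn⟩

theorem exists_lt_rank_add_one_eq (hP : IsPrepolytope n rk) {x : P} (hx : -1 < rk x) :
    ∃ y < x, rk y + 1 = rk x := by
  obtain ⟨c, hxc⟩ := Flag.exists_mem x
  obtain ⟨y, hyc, hy⟩ := hP.exists_mem_flag_rank_eq c (r := rk x - 1) (by omega)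
    (by linarith [(hP.rank_mem_Icc x).2])
  exact ⟨y, (lt_iff_lt_of_mem_flag hP.strictMono c hyc hxc).1 (by omega), by omega⟩

theorem rank_le_of_strictMono (hP : IsPrepolytope n rk) {f : P → ℤ} (hf : StrictMono f)
    (hf_ge : ∀ x, -1 ≤ f x) (x : P) : rk x ≤ f x := by
  induction hr : rk x, (hP.rank_mem_Icc x).1 using Int.leInduction generalizing x with
  | base => exact hf_ge x
  | succ r hr_ge ih =>
    obtain ⟨y, hyx, hy⟩ := hP.exists_lt_rank_add_one_eq (x := x) (by omega)
    have hfy : r ≤ f y := ih y (by omega)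
    have hfyx : f y < f x := hf hyx
    omega

theorem rank_apply {Q : Type*} [PartialOrder Q] {m : ℤ} {rkQ : Q → ℤ} (hP : IsPrepolytope n rk)
    (hQ : IsPrepolytope m rkQ) (e : P ≃o Q) (x : P) : rkQ (e x) = rk x := by
  have hle : rk x ≤ rkQ (e x) :=
    hP.rank_le_of_strictMono (hQ.strictMono.comp e.strictMono)
      (fun y => (hQ.rank_mem_Icc (e y)).1) x
  have hge : rkQ (e x) ≤ rk (e.symm (e x)) :=
    hQ.rank_le_of_strictMono (hP.strictMono.comp e.symm.strictMono)
      (fun y => (hP.rank_mem_Icc (e.symm y)).1) (e x)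
  rw [e.symm_apply_apply] at hge
  exact hge.antisymm hle

theorem eq_of_adj_of_adj (hP : IsPrepolytope n rk) {j : ℤ} (hj : 0 ≤ j) (hjn : j < n)
    {c d d' : Flag P} (hd : IsPolytopeAdj rk j c d) (hd' : IsPolytopeAdj rk j c d') :
    d = d' := by
  by_contra hne
  have hdd' : IsPolytopeAdj rk j d d' := hd.symm.trans_of_ne hd' hne
  obtain ⟨F, hF, hFj⟩ := hP.exists_mem_flag_rank_eq c (r := j - 1) (by omega) (by omega)
  obtain ⟨G, hG, hGj⟩ := hP.exists_mem_flag_rank_eq c (r := j + 1) (by omega) (by omega)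
  have lt_of_mem {s : Flag P} {y z : P} (hy : y ∈ s) (hz : z ∈ s) (hyz : rk y < rk z) : y < z :=
    (lt_iff_lt_of_mem_flag hP.strictMono s hy hz).1 hyz
  obtain ⟨H₁, H₂, -, hH⟩ := hP.diamond F G (lt_of_mem hF hG (by omega)) (by omega)
  have exists_between (s : Flag P) (hFs : F ∈ s) (hGs : G ∈ s) :
      ∃ x ∈ s, rk x = j ∧ (x = H₁ ∨ x = H₂) := by
    obtain ⟨x, hx, hxj⟩ := hP.exists_mem_flag_rank_eq s (r := j) (by omega) (by omega)
    exact ⟨x, hx, hxj, (hH x).1 ⟨lt_of_mem hFs hx (by omega), lt_of_mem hx hGs (by omega)⟩⟩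
  obtain ⟨x, hx, hxj, hxH⟩ := exists_between c hF hG
  obtain ⟨y, hy, hyj, hyH⟩ :=
    exists_between d ((hd.2 F (by omega)).1 hF) ((hd.2 G (by omega)).1 hG)
  obtain ⟨y', hy', -, hyH'⟩ :=
    exists_between d' ((hd'.2 F (by omega)).1 hF) ((hd'.2 G (by omega)).1 hG)
  have hxy : x ≠ y := hd.ne_of_mem_of_mem hP.strictMono hx hxj hy
  have hxy' : x ≠ y' := hd'.ne_of_mem_of_mem hP.strictMono hx hxj hy'
  have hyy' : y ≠ y' := hdd'.ne_of_mem_of_mem hP.strictMono hy hyj hy'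
  grind

theorem commute_flag_map_of_mem_closure {n : ℕ} (hP : IsPrepolytope n rk)
    {g : Fin n → Equiv.Perm (Flag P)}
    (hg : ∀ (j : Fin n) (Φ : Flag P), IsPolytopeAdj rk j Φ (g j Φ))
    {w : Equiv.Perm (Flag P)} (hw : w ∈ Subgroup.closure (Set.range g)) (e : P ≃o P) :
    Commute w (Flag.map e) := by
  induction hw using Subgroup.closure_induction with
  | mem _ hgen =>
    obtain ⟨j, rfl⟩ := hgen
    refine Equiv.ext fun Φ => ?_
    exact hP.eq_of_adj_of_adj (by omega) (by omega) (hg j (Flag.map e Φ))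
      ((hg j Φ).map e (hP.rank_apply hP e))
  | one => exact Commute.one_left _
  | mul _ _ _ _ hu hv => exact hu.mul_left hv
  | inv _ _ hu => exact hu.inv_left

end IsPrepolytope

theorem monodromy_stabilizer_trivial_of_regular_general {n : ℕ} {P : Type*} [PartialOrder P]
    (rk : P → ℤ) (hP : IsPrepolytope (n : ℤ) rk)
    (hreg : IsRegularPolytope (P := P))
    (g : Fin n → Equiv.Perm (Flag P))
    (hg : ∀ (j : Fin n) (Φ : Flag P), IsPolytopeAdj rk (j : ℤ) Φ (g j Φ)) :
    ∀ Λ : Flag P, ∀ w ∈ Subgroup.closure (Set.range g), w Λ = Λ → w = 1 := by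
  intro Λ w hw hΛ
  ext1 Φ
  obtain ⟨e, he⟩ := hreg Λ Φ
  obtain rfl : Flag.map e Λ = Φ := Flag.ext he
  calc w (Flag.map e Λ) = Flag.map e (w Λ) :=
        Equiv.congr_fun (hP.commute_flag_map_of_mem_closure hg hw e) Λ
    _ = Flag.map e Λ := by rw [hΛ]

/-- **In a regular polytope, the stabilizer of any flag in the monodromy group is
trivial.**  Here `g j` is the monodromy generator sending each flag `Φ` to its
unique `j`-adjacent flag `Φ^j`, and `Mon(R)` is the subgroup of the symmetric
group on the flags generated by the `g j`. -/
theorem monodromy_stabilizer_trivial_of_regular {n : ℕ} {P : Type} [PartialOrder P]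
    (rk : P → ℤ) (hP : IsAbstractPolytope (n : ℤ) rk)
    (hreg : IsRegularPolytope (P := P))
    (g : Fin n → Equiv.Perm (Flag P))
    (hg : ∀ (j : Fin n) (Φ : Flag P), IsPolytopeAdj rk (j : ℤ) Φ (g j Φ)) :
    ∀ Λ : Flag P, ∀ w ∈ Subgroup.closure (Set.range g), w Λ = Λ → w = 1 :=
  monodromy_stabilizer_trivial_of_regular_general rk hP.isPrepolytope hreg g hg
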